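/- arXiv:2202.08739 — 2 statements merged into one kernel-verified Lean document; each statement's English description precedes it below -/
import Mathlib

section
/- For every n ≥ 1, the signed count of leaf-labeled rooted trees with n labeled leaves, each tree counted with sign (−1)^{number of internal vertices}, equals (−1)^{n+1} (n−1)!, where all internal (non-root, non-leaf) vertices are required to have degree at least 3. -/
/-- A leaf-labeled rooted tree with `n` leaves and `k` internal vertices, with internal
vertices labeled: a tree on the vertex set `Fin n ⊕ Fin k ⊕ Unit` (leaves ⊕ internal
vertices ⊕ root) in which the leaves and the root have degree 1 and all internal
vertices have degree at least 3. -/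
def RootedLeafTree (n k : ℕ) : Type :=
  {G : SimpleGraph (Fin n ⊕ Fin k ⊕ Unit) //
    G.IsTree ∧
    (∀ i : Fin n, (G.neighborSet (Sum.inl i)).ncard = 1) ∧
    (∀ j : Fin k, 3 ≤ (G.neighborSet (Sum.inr (Sum.inl j))).ncard) ∧
    (G.neighborSet (Sum.inr (Sum.inr ()))).ncard = 1}

open SimpleGraph

theorem tree_iff_deg {V : Type} [Finite V] (G : SimpleGraph V) :
    G.IsTree ↔ G.Connected ∧ (∑ᶠ v, (G.neighborSet v).ncard) + 2 = 2 * Nat.card V := by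
  classical
  have := Fintype.ofFinite V
  rw [isTree_iff_connected_and_card, finsum_eq_sum_of_fintype]
  have h := G.sum_degrees_eq_twice_card_edges
  have h2 : ∀ v, (G.neighborSet v).ncard = G.degree v := by
    intro v
    rw [Set.ncard_eq_toFinset_card', ← card_neighborFinset_eq_degree]; rfl
  have h3 : Nat.card G.edgeSet = G.edgeFinset.card := by
    rw [Nat.card_eq_fintype_card, ← edgeFinset_card]
  simp only [h2, h, h3]
  apply and_congr_right
  intro _
  omega

/-- add a vertex adjacent to the set S -/
def bld {V : Type} (H : SimpleGraph V) (S : Set V) : SimpleGraph (Option V) where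
  Adj x y := match x, y with
    | some x, some y => H.Adj x y
    | none, some y => y ∈ S
    | some x, none => x ∈ S
    | none, none => False
  symm := ⟨by
    rintro (_ | x) (_ | y) h
    · exact h
    · exact h
    · exact h
    · exact H.adj_symm h⟩
  loopless := ⟨by
    rintro (_ | x) h
    · exact h
    · exact H.loopless.irrefl x h⟩

section
variable {V : Type} (H : SimpleGraph V) (S : Set V)
@[simp] theorem bld_ss (x y : V) : (bld H S).Adj (some x) (some y) ↔ H.Adj x y := Iff.rfl
@[simp] theorem bld_ns (y : V) : (bld H S).Adj none (some y) ↔ y ∈ S := Iff.rfl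
@[simp] theorem bld_sn (y : V) : (bld H S).Adj (some y) none ↔ y ∈ S := Iff.rfl

theorem bld_surj (G : SimpleGraph (Option V)) : ∃ H S, G = bld H S := by
  refine ⟨G.comap some, {x | G.Adj none (some x)}, ?_⟩
  ext x y
  rcases x with _ | x <;> rcases y with _ | y <;> simp [G.adj_comm]

theorem bld_inj {H H' : SimpleGraph V} {S S' : Set V} (h : bld H S = bld H' S') :
    H = H' ∧ S = S' := by
  constructor
  · ext x y
    rw [← bld_ss H S, h, bld_ss]
  · ext x
    rw [← bld_ns H S, h, bld_ns]

theorem bld_deg_none : ((bld H S).neighborSet none).ncard = S.ncard := by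
  rw [← Set.ncard_image_of_injective S (Option.some_injective V)]
  congr 1
  ext x
  rcases x with _ | x <;> simp

open Classical in
theorem bld_deg_some [Finite V] (u : V) : ((bld H S).neighborSet (some u)).ncard =
    (H.neighborSet u).ncard + if u ∈ S then 1 else 0 := by
  rw [← Set.ncard_image_of_injective (H.neighborSet u) (Option.some_injective V)]
  split_ifs with h
  · rw [← Set.ncard_insert_of_notMem (a := none) (by simp) (Set.toFinite _)]
    congr 1
    ext x
    rcases x with _ | x <;> simp [h]
  · congr 1
    ext x
    rcases x with _ | x <;> simp [h]

theorem bld_conn (a b : V) : (bld H {a, b}).Connected ↔ (H ⊔ edge a b).Connected := by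
  constructor
  · intro h
    have : Nonempty V := ⟨a⟩
    refine ⟨fun x y => ?_⟩
    let f : Option V → V := fun o => o.getD a
    have hab : (H ⊔ edge a b).Reachable a b := by
      by_cases e : a = b
      · subst e; rfl
      · exact Adj.reachable (by simp [edge_adj, e])
    have key : ∀ x y, (bld H {a, b}).Adj x y → (H ⊔ edge a b).Reachable (f x) (f y) := by
      rintro (_ | x) (_ | y) h
      · rfl
      · rcases h with rfl | rfl
        · rfl
        · exact hab
      · rcases h with rfl | rfl
        · rfl
        · exact hab.symm
      · exact Adj.reachable (Or.inl h)
    obtain ⟨w⟩ := h.preconnected (some x) (some y)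
    have : ∀ x y, (bld H {a, b}).Walk x y → (H ⊔ edge a b).Reachable (f x) (f y) := by
      intro x y w
      induction w with
      | nil => rfl
      | cons h _ ih => exact (key _ _ h).trans ih
    exact this _ _ w
  · intro h
    have key : ∀ x y, (H ⊔ edge a b).Adj x y →
        (bld H {a, b}).Reachable (some x) (some y) := by
      intro x y h
      rcases h with h | h
      · exact Adj.reachable h
      · have h1 : (bld H {a, b}).Adj (some x) none := by
          simp [edge_adj] at h ⊢; tauto
        have h2 : (bld H {a, b}).Adj none (some y) := by
          simp [edge_adj] at h ⊢; tauto
        exact h1.reachable.trans h2.reachable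
    have key2 : ∀ x y, (H ⊔ edge a b).Walk x y →
        (bld H {a, b}).Reachable (some x) (some y) := by
      intro x y w
      induction w with
      | nil => rfl
      | cons h _ ih => exact (key _ _ h).trans ih
    have key3 : ∀ x, (bld H {a, b}).Reachable (some a) x := by
      rintro (_ | x)
      · exact Adj.reachable (by simp)
      · obtain ⟨w⟩ := h.preconnected a x
        exact key2 _ _ w
    have : Nonempty (Option V) := ⟨none⟩
    exact ⟨fun x y => (key3 x).symm.trans (key3 y)⟩

theorem finsum_opt [Finite V] (f : Option V → ℕ) : ∑ᶠ v, f v = f none + ∑ᶠ v, f (some v) := by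
  have := Fintype.ofFinite V
  rw [finsum_eq_sum_of_fintype, finsum_eq_sum_of_fintype, Fintype.sum_option]

open Classical in
theorem bld_sum [Finite V] : ∑ᶠ v, ((bld H S).neighborSet v).ncard =
    (∑ᶠ v, (H.neighborSet v).ncard) + 2 * S.ncard := by
  have := Fintype.ofFinite V
  rw [finsum_opt, bld_deg_none]
  simp only [bld_deg_some, finsum_eq_sum_of_fintype, Finset.sum_add_distrib]
  have : (∑ x, if x ∈ S then 1 else 0) = S.ncard := by
    rw [Set.ncard_eq_toFinset_card']; simp
  omega

theorem bld_tree1 [Finite V] (v : V) : (bld H {v}).IsTree ↔ H.IsTree := by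
  have h := bld_conn H v v
  simp at h
  rw [tree_iff_deg, tree_iff_deg, h, bld_sum]
  simp
  intro _; omega

open Classical in
theorem sup_edge_deg [Finite V] (a b : V) (hab : a ≠ b) (hn : ¬ H.Adj a b) (u : V) :
    ((H ⊔ edge a b).neighborSet u).ncard =
    (H.neighborSet u).ncard + if u ∈ ({a, b} : Set V) then 1 else 0 := by
  split_ifs with h
  · rcases h with rfl | rfl
    · rw [← Set.ncard_insert_of_notMem (a := b) (by simpa using hn) (Set.toFinite _)]
      congr 1
      ext x; simp [edge_adj]; grind
    · rw [← Set.ncard_insert_of_notMem (a := a) (by simpa [H.adj_comm] using hn) (Set.toFinite _)]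
      congr 1
      ext x; simp [edge_adj]; grind
  · congr 1
    ext x; simp [edge_adj]; grind

theorem bld_deg2 [Finite V] (a b : V) (hab : a ≠ b) (hn : ¬ H.Adj a b) (u : V) :
    ((bld H {a,b}).neighborSet (some u)).ncard = ((H ⊔ edge a b).neighborSet u).ncard := by
  classical
  rw [bld_deg_some, sup_edge_deg H a b hab hn]
  congr

theorem bld_tree2 [Finite V] (a b : V) (hab : a ≠ b) (hn : ¬ H.Adj a b) :
    (bld H {a, b}).IsTree ↔ (H ⊔ edge a b).IsTree := by
  rw [tree_iff_deg, tree_iff_deg, bld_conn, finsum_opt, bld_deg_none]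
  simp only [bld_deg2 H a b hab hn, Set.ncard_pair hab]
  simp
  intro _; omega

theorem bld_not_adj (a b : V) (hab : a ≠ b) (h : (bld H {a, b}).IsTree) : ¬ H.Adj a b := by
  intro h1
  have e1 : (bld H {a, b}).Adj none (some a) := by simp
  have e2 : (bld H {a, b}).Adj (some a) (some b) := h1
  have e3 : (bld H {a, b}).Adj (some b) none := by simp
  apply h.2 (Walk.cons e1 (Walk.cons e2 (Walk.cons e3 Walk.nil)))
  rw [Walk.isCycle_def, Walk.isTrail_def]
  simp [hab]

end

/-- trees with degree conditions -/
def TT (V : Type) (D : V → Set ℕ) : Type :=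
  {G : SimpleGraph V // G.IsTree ∧ ∀ v, (G.neighborSet v).ncard ∈ D v}

instance (V : Type) [Finite V] (D : V → Set ℕ) : Finite (TT V D) := by
  unfold TT; infer_instance

theorem TT_congr {V W : Type} (e : W ≃ V) (D : V → Set ℕ) (D' : W → Set ℕ)
    (h : ∀ w, D' w = D (e w)) : Nat.card (TT W D') = Nat.card (TT V D) := by
  have key : ∀ (G : SimpleGraph V) (w : W), ((G.comap e).neighborSet w).ncard =
      (G.neighborSet (e w)).ncard := by
    intro G w
    rw [← Set.ncard_image_of_injective _ e.injective]
    congr 1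
    ext x
    obtain ⟨x, rfl⟩ := e.surjective x
    simp
  symm
  refine Nat.card_congr (Equiv.subtypeEquiv (Equiv.simpleGraph e.symm) fun G => ?_)
  have h1 : Equiv.simpleGraph e.symm G = G.comap e := rfl
  rw [h1]
  refine and_congr (Iso.isTree_iff (Iso.comap e G)).symm ?_
  rw [← e.forall_congr_right]
  refine forall_congr' fun w => ?_
  rw [key, h]

open Classical in
theorem TT_step1 {V : Type} [Fintype V] (D : Option V → Set ℕ) (h0 : D none = {1}) :
    Nat.card (TT (Option V) D) =
      ∑ v, Nat.card (TT V fun u => {m | m + (if u = v then 1 else 0) ∈ D (some u)}) := by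
  rw [← Nat.card_sigma]
  symm
  refine Nat.card_eq_of_bijective (fun p => ⟨bld p.2.1 {p.1}, ?_, ?_⟩) ⟨?_, ?_⟩
  · exact (bld_tree1 _ _).2 p.2.2.1
  · rintro (_ | u)
    · rw [bld_deg_none, h0]; simp
    · rw [bld_deg_some]
      simpa using p.2.2.2 u
  · rintro ⟨v, H, hH⟩ ⟨v', H', hH'⟩ h
    obtain ⟨h1, h2⟩ := bld_inj (Subtype.ext_iff.1 h)
    simp only at h1 h2
    rw [Set.singleton_eq_singleton_iff] at h2
    subst h1 h2
    rfl
  · rintro ⟨G, hG, hd⟩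
    obtain ⟨H, S, rfl⟩ := bld_surj G
    have h1 := hd none
    rw [bld_deg_none, h0, Set.mem_singleton_iff, Set.ncard_eq_one] at h1
    obtain ⟨v, rfl⟩ := h1
    refine ⟨⟨v, H, (bld_tree1 _ _).1 hG, fun u => ?_⟩, rfl⟩
    have := hd (some u)
    rw [bld_deg_some] at this
    simpa using this

theorem TT_step2 {V : Type} [Fintype V] (D : Option V → Set ℕ) (h0 : D none = {2}) :
    Nat.card (TT (Option V) D) =
      Nat.card (TT V fun u => D (some u)) * (Fintype.card V - 1) := by
  classical
  have := Fintype.ofFinite (TT V fun u => D (some u))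
  have e1 : Nat.card (TT V fun u => D (some u)) * (Fintype.card V - 1) =
      ∑ H : TT V (fun u => D (some u)), Nat.card H.1.edgeSet := by
    rw [Nat.card_eq_fintype_card, ← smul_eq_mul, ← Finset.card_univ, ← Finset.sum_const]
    refine Finset.sum_congr rfl fun H _ => ?_
    have := (isTree_iff_connected_and_card.1 H.2.1).2
    rw [Nat.card_eq_fintype_card (α := V)] at this
    omega
  rw [e1, ← Nat.card_sigma]
  symm
  have dec : ∀ (H : SimpleGraph V) (a b : V), H.Adj a b →
      H.deleteEdges {s(a,b)} ⊔ edge a b = H := by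
    intro H a b h
    have := h.ne
    ext x y
    simp [edge_adj]
    grind [SimpleGraph.Adj.symm, SimpleGraph.Adj.ne]
  have sset : ∀ a b : V, {x | x ∈ s(a,b)} = ({a, b} : Set V) := by
    intro a b; ext x; simp
  refine Nat.card_eq_of_bijective
    (fun p => ⟨bld (p.1.1.deleteEdges {p.2.1}) {x | x ∈ p.2.1}, ?_⟩) ⟨?_, ?_⟩
  · obtain ⟨⟨H, hH, hd⟩, ⟨e, he⟩⟩ := p
    induction e using Sym2.ind with | _ a b => ?_
    simp only at he ⊢
    rw [mem_edgeSet] at he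
    have hn : ¬ (H.deleteEdges {s(a,b)}).Adj a b := by simp
    rw [sset, bld_tree2 _ _ _ he.ne hn, dec H a b he]
    refine ⟨hH, ?_⟩
    rintro (_ | u)
    · rw [bld_deg_none, h0, Set.ncard_pair he.ne]; rfl
    · rw [bld_deg2 _ _ _ he.ne hn, dec H a b he]
      exact hd u
  · rintro ⟨⟨H, hH⟩, ⟨e, he⟩⟩ ⟨⟨H', hH'⟩, ⟨e', he'⟩⟩ h
    obtain ⟨h1, h2⟩ := bld_inj (Subtype.ext_iff.1 h)
    simp only at h1 h2 he he'
    have h3 : e = e' := Sym2.ext fun x => by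
      have := congrArg (fun S => x ∈ S) h2
      simpa using this
    subst h3
    have : H = H' := by
      induction e using Sym2.ind with | _ a b => ?_
      rw [← dec H a b he, ← dec H' a b he', h1]
    subst this
    rfl
  · rintro ⟨G, hG, hd⟩
    obtain ⟨H, S, rfl⟩ := bld_surj G
    have h1 := hd none
    rw [bld_deg_none, h0, Set.mem_singleton_iff, Set.ncard_eq_two] at h1
    obtain ⟨a, b, hab, rfl⟩ := h1
    have hn := bld_not_adj H a b hab hG
    refine ⟨⟨⟨H ⊔ edge a b, (bld_tree2 _ _ _ hab hn).1 hG, fun u => ?_⟩,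
      ⟨s(a,b), ?_⟩⟩, ?_⟩
    · rw [← bld_deg2 _ _ _ hab hn]; exact hd (some u)
    · simp [hab]
    · apply Subtype.ext
      simp only [sset]
      congr 1
      ext x y
      simp [edge_adj]
      grind [SimpleGraph.Adj.symm, SimpleGraph.Adj.ne]

theorem TT_split {V : Type} [Finite V] (D D1 D2 : V → Set ℕ) (j : V)
    (h : ∀ u, u ≠ j → D1 u = D u ∧ D2 u = D u) (hj : D j = D1 j ∪ D2 j)
    (hd : Disjoint (D1 j) (D2 j)) :
    Nat.card (TT V D) = Nat.card (TT V D1) + Nat.card (TT V D2) := by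
  have key : {G : SimpleGraph V | G.IsTree ∧ ∀ v, (G.neighborSet v).ncard ∈ D v} =
    {G : SimpleGraph V | G.IsTree ∧ ∀ v, (G.neighborSet v).ncard ∈ D1 v} ∪
    {G : SimpleGraph V | G.IsTree ∧ ∀ v, (G.neighborSet v).ncard ∈ D2 v} := by
    ext G
    simp only [Set.mem_ofPred_eq, Set.mem_union]
    constructor
    · rintro ⟨h1, h2⟩
      have h3 := h2 j
      rw [hj] at h3
      rcases h3 with h3 | h3
      · refine Or.inl ⟨h1, fun v => ?_⟩
        by_cases hv : v = j
        · subst hv; exact h3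
        · rw [(h v hv).1]; exact h2 v
      · refine Or.inr ⟨h1, fun v => ?_⟩
        by_cases hv : v = j
        · subst hv; exact h3
        · rw [(h v hv).2]; exact h2 v
    · rintro (⟨h1, h2⟩ | ⟨h1, h2⟩)
      · refine ⟨h1, fun v => ?_⟩
        by_cases hv : v = j
        · subst hv; rw [hj]; exact Or.inl (h2 v)
        · rw [← (h v hv).1]; exact h2 v
      · refine ⟨h1, fun v => ?_⟩
        by_cases hv : v = j
        · subst hv; rw [hj]; exact Or.inr (h2 v)
        · rw [← (h v hv).2]; exact h2 v
  have h2 : ∀ D : V → Set ℕ, Nat.card (TT V D) =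
    {G : SimpleGraph V | G.IsTree ∧ ∀ v, (G.neighborSet v).ncard ∈ D v}.ncard := fun D => rfl
  rw [h2, h2, h2, key, Set.ncard_union_eq]
  rw [Set.disjoint_left]
  intro G h1 h2
  exact Set.disjoint_left.1 hd (h1.2 j) (h2.2 j)

theorem TT_zero {V : Type} [Finite V] [Nontrivial V] (D : V → Set ℕ) (j : V) (h : D j ⊆ {0}) :
    Nat.card (TT V D) = 0 := by
  have : IsEmpty (TT V D) := by
    constructor
    rintro ⟨G, hG, hd⟩
    have h1 := h (hd j)
    obtain ⟨w, hw⟩ := hG.1.preconnected.exists_adj_of_nontrivial j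
    rw [Set.mem_singleton_iff, Set.ncard_eq_zero] at h1
    have : w ∈ G.neighborSet j := hw
    simp [h1] at this
  simp

/-- degree conditions of the problem -/
def Dg (n k : ℕ) : Fin n ⊕ Fin k ⊕ Unit → Set ℕ
  | Sum.inl _ => {1}
  | Sum.inr (Sum.inl _) => Set.Ici 3
  | Sum.inr (Sum.inr _) => {1}

theorem card_eq (n k : ℕ) : Nat.card (RootedLeafTree n k) = Nat.card (TT _ (Dg n k)) := by
  refine Nat.card_congr (Equiv.subtypeEquivRight fun G => ?_)
  constructor
  · rintro ⟨h, h1, h2, h3⟩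
    refine ⟨h, ?_⟩
    rintro (v | v | v)
    · exact h1 v
    · exact h2 v
    · exact h3
  · rintro ⟨h, h1⟩
    exact ⟨h, fun i => h1 (Sum.inl i), fun j => h1 (Sum.inr (Sum.inl j)),
      h1 (Sum.inr (Sum.inr ()))⟩

theorem rec_aux (n k : ℕ) (j : Fin k) (D : Fin n ⊕ Fin k ⊕ Unit → Set ℕ)
    (hD : D = fun u => if u = Sum.inr (Sum.inl j) then {2} else Dg n k u) :
    Nat.card (TT _ D) = Nat.card (TT _ (Dg n (k-1))) * (n + k - 1) := by
  obtain ⟨k, rfl⟩ : ∃ k', k = k' + 1 := ⟨k - 1, by have := j.2; omega⟩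
  let f : Option (Fin n ⊕ Fin k ⊕ Unit) → Fin n ⊕ Fin (k+1) ⊕ Unit
    | none => Sum.inr (Sum.inl j)
    | some (Sum.inl i) => Sum.inl i
    | some (Sum.inr (Sum.inl i)) => Sum.inr (Sum.inl (j.succAbove i))
    | some (Sum.inr (Sum.inr i)) => Sum.inr (Sum.inr i)
  have hf : Function.Bijective f := by
    rw [Fintype.bijective_iff_injective_and_card]
    constructor
    · rintro (_ | i | i | i) (_ | i' | i' | i') h <;>
        simp_all [f, Fin.succAbove_ne, Fin.ne_succAbove]
    · simp; omega
  rw [← TT_congr (Equiv.ofBijective f hf) D (fun w => D (f w)) (fun w => rfl), TT_step2]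
  · congr 2
    · congr 1
      funext u
      rcases u with i | i | i <;> simp [f, hD, Dg, Fin.succAbove_ne]
    · simp
  · simp [f, hD]

theorem rec_main (n k : ℕ) (hn : 1 ≤ n) : Nat.card (TT _ (Dg (n+1) k)) =
    k * (Nat.card (TT _ (Dg n k)) + Nat.card (TT _ (Dg n (k-1))) * (n + k - 1)) := by
  classical
  let f : Option (Fin n ⊕ Fin k ⊕ Unit) → Fin (n+1) ⊕ Fin k ⊕ Unit
    | none => Sum.inl (Fin.last n)
    | some (Sum.inl i) => Sum.inl i.castSucc
    | some (Sum.inr i) => Sum.inr i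
  have hf : Function.Bijective f := by
    rw [Fintype.bijective_iff_injective_and_card]
    constructor
    · rintro (_ | i | i) (_ | i' | i') h <;>
        simp_all [f, Fin.ext_iff] <;> omega
    · simp; omega
  have hnt : Nontrivial (Fin n ⊕ Fin k ⊕ Unit) :=
    ⟨Sum.inl ⟨0, hn⟩, Sum.inr (Sum.inr ()), by simp⟩
  rw [← TT_congr (Equiv.ofBijective f hf) (Dg (n+1) k) (fun w => Dg (n+1) k (f w)) (fun w => rfl),
    TT_step1 _ (by simp [f, Dg])]
  have hfD : ∀ u, Dg (n+1) k (f (some u)) = Dg n k u := by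
    rintro (u | u | u) <;> rfl
  simp only [hfD]
  rw [Fintype.sum_sum_type, Fintype.sum_sum_type]
  rw [Finset.sum_eq_zero, zero_add, Fintype.sum_unique (ι := Unit), TT_zero _ (Sum.inr (Sum.inr ()))]
  · rw [add_zero]
    refine (Finset.sum_congr rfl fun j _ => ?_).trans (Fin.sum_const k _)
    rw [← rec_aux n k j _ rfl, add_comm]
    apply TT_split _ _ _ (Sum.inr (Sum.inl j))
    · intro u hu; simp [hu]
    · ext m; simp [Dg]; omega
    · simp [Dg]
  · intro m; simp [Dg]
  · intro i _
    apply TT_zero _ (Sum.inl i)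
    intro m; simp [Dg]

theorem base_pos (k : ℕ) (hk : 1 ≤ k) : Nat.card (TT _ (Dg 1 k)) = 0 := by
  have : IsEmpty (TT _ (Dg 1 k)) := by
    constructor
    rintro ⟨G, hG, hd⟩
    have h := ((tree_iff_deg G).1 hG).2
    rw [finsum_eq_sum_of_fintype, Fintype.sum_sum_type, Fintype.sum_sum_type] at h
    have h1 : (G.neighborSet (Sum.inl 0)).ncard = 1 := hd (Sum.inl 0)
    have h2 : (G.neighborSet (Sum.inr (Sum.inr PUnit.unit))).ncard = 1 :=
      hd (Sum.inr (Sum.inr ()))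
    have h3 : ∑ j : Fin k, 3 ≤ ∑ j : Fin k, (G.neighborSet (Sum.inr (Sum.inl j))).ncard :=
      Finset.sum_le_sum fun j _ => hd (Sum.inr (Sum.inl j))
    simp at h h3
    omega
  simp

theorem base_zero : Nat.card (TT _ (Dg 1 0)) = 1 := by
  rw [Nat.card_eq_one_iff_unique]
  have uniq : ∀ x : Fin 1 ⊕ Fin 0 ⊕ Unit, x = Sum.inl 0 ∨ x = Sum.inr (Sum.inr ()) := by
    rintro (x | x | x)
    · left; congr; exact Subsingleton.elim _ _
    · exact x.elim0
    · right; rfl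
  constructor
  · constructor
    have : ∀ G : TT _ (Dg 1 0), G.1 = ⊤ := by
      rintro ⟨G, hG, hd⟩
      have h1 : G.Adj (Sum.inl 0) (Sum.inr (Sum.inr ())) := by
        have : Nontrivial (Fin 1 ⊕ Fin 0 ⊕ Unit) :=
          ⟨Sum.inl 0, Sum.inr (Sum.inr ()), by simp⟩
        obtain ⟨w, hw⟩ := hG.1.preconnected.exists_adj_of_nontrivial (Sum.inl 0)
        rcases uniq w with rfl | rfl
        · exact (hw.ne rfl).elim
        · exact hw
      ext x y
      rcases uniq x with rfl | rfl <;> rcases uniq y with rfl | rfl <;> simp [h1, h1.symm]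
    intro G H
    exact Subtype.ext ((this G).trans (this H).symm)
  · have hd : ∀ v, ((⊤ : SimpleGraph (Fin 1 ⊕ Fin 0 ⊕ Unit)).neighborSet v).ncard = 1 := by
      intro v
      rw [Set.ncard_eq_one]
      rcases uniq v with rfl | rfl
      · refine ⟨Sum.inr (Sum.inr ()), ?_⟩
        ext x
        rcases uniq x with rfl | rfl <;> simp
      · refine ⟨Sum.inl 0, ?_⟩
        ext x
        rcases uniq x with rfl | rfl <;> simp
    refine ⟨⟨⊤, ?_, ?_⟩⟩
    · rw [tree_iff_deg]
      have : Nonempty (Fin 1 ⊕ Fin 0 ⊕ Unit) := ⟨Sum.inl 0⟩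
      refine ⟨connected_top, ?_⟩
      simp only [hd, finsum_eq_sum_of_fintype]
      simp
    · intro v
      rw [hd]
      rcases uniq v with rfl | rfl <;> simp [Dg]

theorem van (n k : ℕ) (hn : 1 ≤ n) (h : n ≤ k) : Nat.card (TT _ (Dg n k)) = 0 := by
  induction n, hn using Nat.le_induction generalizing k with
  | base => exact base_pos k h
  | succ n hn ih =>
    rw [rec_main n k hn, ih k (by omega), ih (k-1) (by omega)]; simp

/-- For `n ≥ 1`, the signed count of leaf-labeled rooted trees with `n` labeled leaves,
each counted with sign `(-1)^{number of internal vertices}`, equals `(-1)^{n+1} (n-1)!`.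
(Internal vertices are unlabeled; since such a tree has no automorphisms fixing the
leaves, this is accounted for by dividing the internally-labeled count by `k!`.) -/
theorem signed_count_rooted_trees (n : ℕ) (hn : 1 ≤ n) :
    ∑ k ∈ Finset.range n,
        ((-1 : ℚ)) ^ k * (Nat.card (RootedLeafTree n k) : ℚ) / (k.factorial : ℚ) =
      ((-1 : ℚ)) ^ (n + 1) * ((n - 1).factorial : ℚ) := by
  simp only [card_eq]
  induction n, hn using Nat.le_induction with
  | base => simp [base_zero]
  | succ n hn ih =>
    have e1 : ((-1 : ℚ)) ^ (n + 1 + 1) * ((n + 1 - 1).factorial : ℚ) =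
        - n * (((-1 : ℚ)) ^ (n + 1) * ((n - 1).factorial : ℚ)) := by
      obtain ⟨m, rfl⟩ : ∃ m, n = m + 1 := ⟨n - 1, by omega⟩
      simp only [Nat.add_sub_cancel, Nat.factorial_succ]
      push_cast; ring
    rw [e1, ← ih, Finset.sum_range_succ']
    set t : ℕ → ℚ := fun k => (Nat.card (TT _ (Dg n k)) : ℚ) / (k.factorial : ℚ) with ht
    have e2 : ∀ k : ℕ, ((-1 : ℚ)) ^ (k+1) * (Nat.card (TT _ (Dg (n+1) (k+1))) : ℚ) /
        ((k+1).factorial : ℚ) = (-1)^(k+1) * (k+1 : ℕ) * t (k+1) - (-1)^k * k * t k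
          - n * ((-1)^k * t k) := by
      intro k
      have : (k.factorial : ℚ) ≠ 0 := by positivity
      have h2 : (k + 1 : ℚ) ≠ 0 := by positivity
      have h4 := rec_main n (k+1) hn
      change _ = (k+1) * (_ + Nat.card (TT _ (Dg n k)) * (n + k)) at h4
      rw [h4, ht]
      simp only [Nat.add_sub_cancel, Nat.factorial_succ, ← Nat.add_assoc]
      push_cast
      field_simp
      ring
    simp only [e2]
    rw [Finset.sum_sub_distrib,
      Finset.sum_range_sub (fun k : ℕ => (-1 : ℚ)^k * k * t k), ← Finset.mul_sum]
    have e3 : t n = 0 := by simp [ht, van n n hn le_rfl]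
    rw [rec_main n 0 hn, e3]
    simp [ht, mul_div_assoc]
end

section
/- For every n ≥ 3, the signed count of leaf-labeled (unrooted) trees with n labeled leaves and all internal vertices of degree at least 3, each tree counted with sign (−1)^{number of internal vertices}, equals (−1)^n (n−2)!. -/
/-- A leaf-labeled tree with `n` leaves and `k` internal vertices, with internal
vertices labeled: a tree on the vertex set `Fin n ⊕ Fin k` in which the leaves have
degree 1 and all internal vertices have degree at least 3. -/
def LeafTree (n k : ℕ) : Type :=
  {G : SimpleGraph (Fin n ⊕ Fin k) //
    G.IsTree ∧
    (∀ i : Fin n, (G.neighborSet (Sum.inl i)).ncard = 1) ∧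
    (∀ j : Fin k, 3 ≤ (G.neighborSet (Sum.inr j)).ncard)}

namespace STree

open Finset

lemma conn_of_map {V W : Type*} {G : SimpleGraph V} {H : SimpleGraph W} (f : V → W)
    (hf : ∀ v v', G.Adj v v' → H.Reachable (f v) (f v'))
    (hs : ∀ w, ∃ v, H.Reachable w (f v)) (hG : G.Connected) : H.Connected := by
  have key : ∀ v v', G.Reachable v v' → H.Reachable (f v) (f v') := by
    rintro v v' ⟨p⟩
    induction p with
    | nil => exact SimpleGraph.Reachable.refl _
    | cons h p ih => exact (hf _ _ h).trans ih
  haveI : Nonempty W := hG.nonempty.map f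
  refine SimpleGraph.Connected.mk ?_
  intro x y
  obtain ⟨a, ha⟩ := hs x
  obtain ⟨b, hb⟩ := hs y
  exact ha.trans ((key a b (hG.preconnected a b)).trans hb.symm)

lemma tree_iff {V : Type*} [Fintype V] (G : SimpleGraph V) :
    G.IsTree ↔ G.Connected ∧ ∑ v, (G.neighborSet v).ncard + 2 = 2 * Fintype.card V := by
  classical
  rw [SimpleGraph.isTree_iff_connected_and_card]
  have h : ∑ v, (G.neighborSet v).ncard = 2 * Nat.card G.edgeSet := by
    have := G.sum_degrees_eq_twice_card_edges
    rw [Nat.card_eq_fintype_card, ← SimpleGraph.edgeFinset_card, ← this]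
    refine Finset.sum_congr rfl fun v _ => ?_
    rw [Set.ncard_eq_toFinset_card', SimpleGraph.degree, SimpleGraph.neighborFinset]
  rw [h, Nat.card_eq_fintype_card (α := V)]
  refine and_congr_right fun _ => ?_
  omega

/-- number of trees with given degree predicates -/
noncomputable def Cnt (V : Type) (P : V → ℕ → Prop) : ℕ :=
  Nat.card {G : SimpleGraph V // G.IsTree ∧ ∀ v, P v (G.neighborSet v).ncard}

lemma iso_deg {V V' : Type} {G : SimpleGraph V} {G' : SimpleGraph V'} (f : G ≃g G') (v : V) :
    (G'.neighborSet (f v)).ncard = (G.neighborSet v).ncard := by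
  have : G'.neighborSet (f v) = f '' G.neighborSet v := by
    ext x
    constructor
    · intro hx
      refine ⟨f.symm x, ?_, by simp⟩
      have : G'.Adj (f v) (f (f.symm x)) := by simpa using hx
      exact f.map_adj_iff.1 this
    · rintro ⟨y, hy, rfl⟩
      exact f.map_adj_iff.2 hy
  rw [this, Set.ncard_image_of_injective _ f.injective]

lemma Cnt_equiv {V V' : Type} (e : V ≃ V') (P : V' → ℕ → Prop) :
    Cnt V (fun v => P (e v)) = Cnt V' P := by
  unfold Cnt
  refine Nat.card_congr (Equiv.subtypeEquiv e.simpleGraph ?_)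
  intro G
  let f : G ≃g e.simpleGraph G := ⟨e, by intro a b; simp [Equiv.simpleGraph]⟩
  refine and_congr f.isTree_iff ?_
  rw [← e.forall_congr_right]
  refine forall_congr' fun v => ?_
  have := iso_deg f v
  change (SimpleGraph.neighborSet _ (e v)).ncard = _ at this
  rw [this]

/-! pendant -/

def pend {W : Type} (G : SimpleGraph W) (w : W) : SimpleGraph (Option W) where
  Adj x y := match x, y with
    | none, none => False
    | none, some b => b = w
    | some a, none => a = w
    | some a, some b => G.Adj a b
  symm := ⟨by rintro (_|a) (_|b) h <;> simp_all [G.adj_comm]⟩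
  loopless := ⟨by rintro (_|a) <;> simp⟩

lemma pend_deg_none {W : Type} (G : SimpleGraph W) (w : W) :
    ((pend G w).neighborSet none).ncard = 1 := by
  rw [Set.ncard_eq_one]
  refine ⟨some w, ?_⟩
  ext (_|x) <;> simp [pend]

open Classical in
lemma pend_deg_some {W : Type} [Fintype W] (G : SimpleGraph W) (w x : W) :
    ((pend G w).neighborSet (some x)).ncard
      = (G.neighborSet x).ncard + if x = w then 1 else 0 := by
  split_ifs with h
  · subst h
    have : (pend G x).neighborSet (some x) = insert none (some '' G.neighborSet x) := by
      ext (_|y) <;> simp [pend]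
    rw [this, Set.ncard_insert_of_notMem (by simp) (Set.toFinite _),
      Set.ncard_image_of_injective _ (Option.some_injective _)]
  · have : (pend G w).neighborSet (some x) = (some '' G.neighborSet x) := by
      ext (_|y) <;> simp [pend, h]
    rw [this, Set.ncard_image_of_injective _ (Option.some_injective _), add_zero]

lemma pend_conn {W : Type} (G : SimpleGraph W) (w : W) :
    (pend G w).Connected ↔ G.Connected := by
  constructor
  · refine conn_of_map (fun o => o.getD w) ?_ (fun x => ⟨some x, by simp⟩)
    rintro (_|a) (_|b) h
    · exact SimpleGraph.Reachable.refl _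
    · have : b = w := h
      subst this; exact SimpleGraph.Reachable.refl _
    · have : a = w := h
      subst this; exact SimpleGraph.Reachable.refl _
    · exact SimpleGraph.Adj.reachable h
  · refine conn_of_map some ?_ ?_
    · intro a b h
      exact SimpleGraph.Adj.reachable h
    · rintro (_|x)
      · exact ⟨w, SimpleGraph.Adj.reachable (show (pend G w).Adj none (some w) from rfl)⟩
      · exact ⟨x, SimpleGraph.Reachable.refl _⟩

lemma pend_tree {W : Type} [Fintype W] (G : SimpleGraph W) (w : W) :
    (pend G w).IsTree ↔ G.IsTree := by
  classical
  rw [tree_iff, tree_iff, pend_conn, Fintype.sum_option, pend_deg_none, Fintype.card_option]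
  simp only [pend_deg_some, Finset.sum_add_distrib, Finset.sum_ite_eq', Finset.mem_univ, if_true]
  refine and_congr_right fun _ => ?_
  omega

open Classical in
lemma Cnt_pend {W : Type} [Fintype W] (P : Option W → ℕ → Prop) (h1 : ∀ d, P none d ↔ d = 1) :
    Cnt (Option W) P = ∑ w : W, Cnt W (fun x d => P (some x) (d + if x = w then 1 else 0)) := by
  unfold Cnt
  rw [← Nat.card_sigma]
  symm
  refine Nat.card_congr (Equiv.ofBijective (fun p => ⟨pend p.2.1 p.1, ?_, ?_⟩) ⟨?_, ?_⟩)
  · exact (pend_tree _ _).2 p.2.2.1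
  · rintro (_|x)
    · rw [pend_deg_none, h1]
    · rw [pend_deg_some]; exact p.2.2.2 x
  · rintro ⟨w, G, hG⟩ ⟨w', G', hG'⟩ h
    have h : pend G w = pend G' w' := congrArg Subtype.val h
    have hw : w = w' := by
      have : (pend G w).Adj none (some w) := rfl
      rw [h] at this
      exact this
    subst hw
    have : G = G' := by
      ext x y
      have : (pend G w).Adj (some x) (some y) ↔ (pend G' w).Adj (some x) (some y) := by rw [h]
      exact this
    subst this
    rfl
  · rintro ⟨H, hT, hP⟩
    have h := (h1 _).1 (hP none)
    rw [Set.ncard_eq_one] at h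
    obtain ⟨u, hu⟩ := h
    have hadj : ∀ x, H.Adj none x ↔ x = u := fun x => by
      rw [← SimpleGraph.mem_neighborSet, hu]; rfl
    obtain (_|w) := u
    · exact absurd ((hadj none).2 rfl) (H.loopless.irrefl _)
    have hH : pend (H.comap some) w = H := by
      ext (_|x) (_|y)
      · simp
      · rw [hadj]; simp [pend]
      · rw [H.adj_comm, hadj]; simp [pend]
      · simp [pend]
    refine ⟨⟨w, H.comap some, ?_, ?_⟩, ?_⟩
    · rwa [← pend_tree _ w, hH]
    · intro x
      have := hP (some x)
      rw [← hH, pend_deg_some] at this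
      exact this
    · exact Subtype.ext hH

/-! subdivision -/

def subd {W : Type} (G : SimpleGraph W) (e : Sym2 W) : SimpleGraph (Option W) where
  Adj x y := match x, y with
    | none, none => False
    | none, some b => b ∈ e
    | some a, none => a ∈ e
    | some a, some b => G.Adj a b ∧ s(a, b) ≠ e
  symm := ⟨by rintro (_|a) (_|b) h <;> simp_all [G.adj_comm, Sym2.eq_swap]⟩
  loopless := ⟨by rintro (_|a) <;> simp⟩

lemma subd_deg_none {W : Type} (G : SimpleGraph W) (e : Sym2 W) (he : e ∈ G.edgeSet) :
    ((subd G e).neighborSet none).ncard = 2 := by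
  induction e using Sym2.ind with
  | _ a b =>
  rw [Set.ncard_eq_two]
  have : G.Adj a b := he
  refine ⟨some a, some b, by simpa using this.ne, ?_⟩
  ext (_|x) <;> simp [subd]

lemma subd_deg_some {W : Type} (G : SimpleGraph W) (e : Sym2 W) (he : e ∈ G.edgeSet) (x : W) :
    ((subd G e).neighborSet (some x)).ncard = (G.neighborSet x).ncard := by
  classical
  have : (subd G e).neighborSet (some x) =
      (fun y => if s(x, y) = e then none else some y) '' G.neighborSet x := by
    ext (_|y)
    · constructor
      · intro h
        have h : x ∈ e := h
        obtain ⟨y, rfl⟩ := h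
        exact ⟨y, he, by simp⟩
      · rintro ⟨y, hy, h⟩
        simp only at h
        split_ifs at h with h'
        subst h'
        exact Sym2.mem_mk_left _ _
    · constructor
      · rintro ⟨h, h'⟩
        exact ⟨y, h, by simp [h']⟩
      · rintro ⟨z, hz, h⟩
        simp only at h
        split_ifs at h with h'
        cases h
        exact ⟨hz, h'⟩
  rw [this, Set.ncard_image_of_injOn]
  intro y _ z _ h
  simp only at h
  split_ifs at h with h1 h2
  · exact Sym2.congr_right.1 (h1.trans h2.symm)
  · exact Option.some_injective _ h

lemma subd_conn {W : Type} (G : SimpleGraph W) (e : Sym2 W) (he : e ∈ G.edgeSet) :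
    (subd G e).Connected ↔ G.Connected := by
  induction e using Sym2.ind with
  | _ a b =>
  have hab : G.Adj a b := he
  have ha : (subd G s(a, b)).Adj none (some a) := Sym2.mem_mk_left _ _
  have hb : (subd G s(a, b)).Adj none (some b) := Sym2.mem_mk_right _ _
  have hr : ∀ x, x ∈ s(a, b) → G.Reachable a x := by
    intro x hx
    rcases Sym2.mem_iff.1 hx with rfl | rfl
    · exact SimpleGraph.Reachable.refl _
    · exact hab.reachable
  constructor
  · refine conn_of_map (fun o => o.getD a) ?_ (fun x => ⟨some x, by simp⟩)
    rintro (_|x) (_|y) h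
    · exact SimpleGraph.Reachable.refl _
    · exact hr y h
    · exact (hr x h).symm
    · exact SimpleGraph.Adj.reachable h.1
  · refine conn_of_map some ?_ ?_
    · intro x y h
      by_cases hxy : s(x, y) = s(a, b)
      · rcases Sym2.eq_iff.1 hxy with ⟨rfl, rfl⟩ | ⟨rfl, rfl⟩
        · exact ha.reachable.symm.trans hb.reachable
        · exact hb.reachable.symm.trans ha.reachable
      · exact SimpleGraph.Adj.reachable (show (subd G s(a, b)).Adj (some x) (some y) from ⟨h, hxy⟩)
    · rintro (_|x)
      · exact ⟨a, ha.reachable⟩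
      · exact ⟨x, SimpleGraph.Reachable.refl _⟩

lemma subd_tree {W : Type} [Fintype W] (G : SimpleGraph W) (e : Sym2 W) (he : e ∈ G.edgeSet) :
    (subd G e).IsTree ↔ G.IsTree := by
  rw [tree_iff, tree_iff, subd_conn G e he, Fintype.sum_option, subd_deg_none G e he,
    Fintype.card_option]
  simp only [subd_deg_some G e he]
  refine and_congr_right fun _ => ?_
  omega

lemma no_triangle {V : Type} {H : SimpleGraph V} (hH : H.IsTree) {u a b : V}
    (h1 : H.Adj u a) (h2 : H.Adj u b) (h3 : H.Adj a b) : False := by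
  have := hH.isAcyclic
  refine this (SimpleGraph.Walk.cons h1 (SimpleGraph.Walk.cons h3
    (SimpleGraph.Walk.cons h2.symm SimpleGraph.Walk.nil))) ?_
  rw [SimpleGraph.Walk.isCycle_def, SimpleGraph.Walk.isTrail_def]
  simp [h1.ne, h2.ne, h3.ne, h1.ne', h2.ne', h3.ne']

lemma Cnt_subd {W : Type} [Fintype W] (P : Option W → ℕ → Prop) (h2 : ∀ d, P none d ↔ d = 2) :
    Cnt (Option W) P = Cnt W (fun x => P (some x)) * (Fintype.card W - 1) := by
  classical
  unfold Cnt
  have hc : Nat.card (Σ G : {G : SimpleGraph W //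
      G.IsTree ∧ ∀ v, P (some v) (G.neighborSet v).ncard}, G.1.edgeSet) =
      Nat.card {G : SimpleGraph W //
      G.IsTree ∧ ∀ v, P (some v) (G.neighborSet v).ncard} * (Fintype.card W - 1) := by
    rw [Nat.card_sigma, Finset.sum_congr rfl (g := fun _ => Fintype.card W - 1)]
    · simp [Nat.card_eq_fintype_card]
    · rintro ⟨G, hG, _⟩ -
      have := ((SimpleGraph.isTree_iff_connected_and_card).1 hG).2
      rw [Nat.card_eq_fintype_card (α := W)] at this
      simp only
      omega
  rw [← hc]
  symm
  refine Nat.card_congr (Equiv.ofBijective (fun p => ⟨subd p.1.1 p.2.1, ?_, ?_⟩) ⟨?_, ?_⟩)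
  · exact (subd_tree _ _ p.2.2).2 p.1.2.1
  · rintro (_|x)
    · rw [subd_deg_none _ _ p.2.2, h2]
    · rw [subd_deg_some _ _ p.2.2]; exact p.1.2.2 x
  · rintro ⟨⟨G, hG⟩, e, he⟩ ⟨⟨G', hG'⟩, e', he'⟩ h
    have h : subd G e = subd G' e' := congrArg Subtype.val h
    simp only at he he'
    have hw : e = e' := by
      refine Sym2.ext fun x => ?_
      have : (subd G e).Adj none (some x) ↔ (subd G' e').Adj none (some x) := by rw [h]
      exact this
    subst hw
    have : G = G' := by
      ext x y
      by_cases hxy : s(x, y) = e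
      · subst hxy
        exact ⟨fun _ => he', fun _ => he⟩
      · have : (subd G e).Adj (some x) (some y) ↔ (subd G' e).Adj (some x) (some y) := by rw [h]
        have this : (G.Adj x y ∧ s(x, y) ≠ e) ↔ (G'.Adj x y ∧ s(x, y) ≠ e) := this
        simpa [hxy] using this
    subst this
    rfl
  · rintro ⟨H, hT, hP⟩
    have h := (h2 _).1 (hP none)
    rw [Set.ncard_eq_two] at h
    obtain ⟨u, v, huv, hu⟩ := h
    have hadj : ∀ x, H.Adj none x ↔ x = u ∨ x = v := fun x => by
      rw [← SimpleGraph.mem_neighborSet, hu]; rfl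
    obtain (_|a) := u
    · exact absurd ((hadj none).2 (Or.inl rfl)) (H.loopless.irrefl _)
    obtain (_|b) := v
    · exact absurd ((hadj none).2 (Or.inr rfl)) (H.loopless.irrefl _)
    have hab : a ≠ b := fun h => huv (by rw [h])
    have hnot : ¬ H.Adj (some a) (some b) := fun h =>
      no_triangle hT ((hadj _).2 (Or.inl rfl)) ((hadj _).2 (Or.inr rfl)) h
    have hnot' : ∀ x y, H.Adj (some x) (some y) → s(x, y) ≠ s(a, b) := by
      intro x y h hxy
      rcases Sym2.eq_iff.1 hxy with ⟨rfl, rfl⟩ | ⟨rfl, rfl⟩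
      · exact hnot h
      · exact hnot h.symm
    let G : SimpleGraph W :=
      { Adj := fun x y => H.Adj (some x) (some y) ∨ s(x, y) = s(a, b)
        symm := ⟨fun x y h => h.imp (fun h => h.symm) (fun h => by rw [Sym2.eq_swap, h])⟩
        loopless := ⟨by
          rintro x (h | h)
          · exact H.loopless.irrefl _ h
          · rcases Sym2.eq_iff.1 h with ⟨rfl, rfl⟩ | ⟨rfl, rfl⟩ <;> exact hab rfl⟩ }
    have he : s(a, b) ∈ G.edgeSet := show G.Adj a b from Or.inr rfl
    have hH : subd G s(a, b) = H := by
      ext (_|x) (_|y)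
      · simp
      · rw [hadj]; simp [subd]
      · rw [H.adj_comm, hadj]; simp [subd]
      · change ((H.Adj (some x) (some y) ∨ s(x, y) = s(a, b)) ∧ s(x, y) ≠ s(a, b)) ↔ _
        have := hnot' x y
        tauto
    refine ⟨⟨⟨G, ?_, ?_⟩, ⟨s(a, b), he⟩⟩, ?_⟩
    · rwa [← subd_tree _ _ he, hH]
    · intro x
      have := hP (some x)
      rw [← hH, subd_deg_some _ _ he] at this
      exact this
    · exact Subtype.ext hH

/-! The recurrence -/

def PP (A B : Type) : A ⊕ B → ℕ → Prop := Sum.elim (fun _ d => d = 1) (fun _ d => 3 ≤ d)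

lemma card_LT (n k : ℕ) : Nat.card (LeafTree n k) = Cnt (Fin n ⊕ Fin k) (PP _ _) := by
  unfold Cnt LeafTree
  refine Nat.card_congr (Equiv.subtypeEquivRight fun G => ?_)
  simp [PP, Sum.forall]

lemma Cnt_congr {V : Type} {P Q : V → ℕ → Prop} (h : ∀ v d, P v d ↔ Q v d) : Cnt V P = Cnt V Q := by
  have : P = Q := by ext v d; exact h v d
  rw [this]

lemma Cnt_zero {V : Type} [Nontrivial V] [Finite V] {P : V → ℕ → Prop} (v : V)
    (h : ∀ d, P v d → d = 0) : Cnt V P = 0 := by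
  unfold Cnt
  rw [Nat.card_eq_zero]
  left
  refine ⟨fun ⟨G, hG, hP⟩ => ?_⟩
  have := h _ (hP v)
  rw [Set.ncard_eq_zero (Set.toFinite _)] at this
  obtain ⟨w, hw⟩ := hG.connected.preconnected.exists_adj_of_nontrivial v
  have hw : w ∈ G.neighborSet v := hw
  rw [this] at hw
  exact hw

lemma Cnt_split {V : Type} [Finite V] {P Q R : V → ℕ → Prop} (v : V)
    (hv : ∀ d, P v d ↔ Q v d ∨ R v d) (hd : ∀ d, Q v d → ¬ R v d)
    (hQ : ∀ w, w ≠ v → ∀ d, P w d ↔ Q w d) (hR : ∀ w, w ≠ v → ∀ d, P w d ↔ R w d) :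
    Cnt V P = Cnt V Q + Cnt V R := by
  classical
  unfold Cnt
  rw [← Nat.card_sum]
  refine Nat.card_congr ((Equiv.subtypeEquivRight fun G => ?_).trans
    (subtypeOrEquiv _ _ ?_))
  · constructor
    · rintro ⟨hT, hP⟩
      rcases (hv _).1 (hP v) with h | h
      · refine Or.inl ⟨hT, fun w => ?_⟩
        by_cases hw : w = v
        · subst hw; exact h
        · exact (hQ w hw _).1 (hP w)
      · refine Or.inr ⟨hT, fun w => ?_⟩
        by_cases hw : w = v
        · subst hw; exact h
        · exact (hR w hw _).1 (hP w)
    · rintro (⟨hT, hP⟩ | ⟨hT, hP⟩)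
      · refine ⟨hT, fun w => ?_⟩
        by_cases hw : w = v
        · subst hw; exact (hv _).2 (Or.inl (hP _))
        · exact (hQ w hw _).2 (hP w)
      · refine ⟨hT, fun w => ?_⟩
        by_cases hw : w = v
        · subst hw; exact (hv _).2 (Or.inr (hP _))
        · exact (hR w hw _).2 (hP w)
  · rw [Pi.disjoint_iff]
    intro G
    rw [Prop.disjoint_iff]
    by_contra! h
    exact hd _ (h.1.2 v) (h.2.2 v)

noncomputable def eA (n k : ℕ) : Option (Fin n ⊕ Fin k) ≃ Fin (n + 1) ⊕ Fin k :=
  Equiv.ofBijective (fun o => match o with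
    | none => Sum.inl 0
    | some (Sum.inl i) => Sum.inl i.succ
    | some (Sum.inr j) => Sum.inr j) (by
    constructor
    · rintro (_|_|_) (_|_|_) h <;> simp_all [Fin.succ_ne_zero]
      exact absurd h.symm (Fin.succ_ne_zero _)
    · rintro (i|j)
      · induction i using Fin.cases with
        | zero => exact ⟨none, rfl⟩
        | succ i => exact ⟨some (Sum.inl i), rfl⟩
      · exact ⟨some (Sum.inr j), rfl⟩)

noncomputable def eB (n k : ℕ) (j : Fin (k + 1)) : Option (Fin n ⊕ Fin k) ≃ Fin n ⊕ Fin (k + 1) :=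
  Equiv.ofBijective (fun o => match o with
    | none => Sum.inr j
    | some (Sum.inl i) => Sum.inl i
    | some (Sum.inr l) => Sum.inr (j.succAbove l)) (by
    constructor
    · rintro (_|_|_) (_|_|_) h <;> simp_all [Fin.succAbove_ne]
    · rintro (i|l)
      · exact ⟨some (Sum.inl i), rfl⟩
      · by_cases h : l = j
        · exact ⟨none, by rw [h]⟩
        · obtain ⟨y, rfl⟩ := Fin.exists_succAbove_eq h
          exact ⟨some (Sum.inr y), rfl⟩)

lemma eA_none (n k : ℕ) : eA n k none = Sum.inl 0 := rfl
lemma eA_inl (n k : ℕ) (i : Fin n) : eA n k (some (Sum.inl i)) = Sum.inl i.succ := rfl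
lemma eA_inr (n k : ℕ) (i : Fin k) : eA n k (some (Sum.inr i)) = Sum.inr i := rfl
lemma eB_none (n k : ℕ) (j : Fin (k + 1)) : eB n k j none = Sum.inr j := rfl
lemma eB_inl (n k : ℕ) (j : Fin (k + 1)) (i : Fin n) :
    eB n k j (some (Sum.inl i)) = Sum.inl i := rfl
lemma eB_inr (n k : ℕ) (j : Fin (k + 1)) (i : Fin k) :
    eB n k j (some (Sum.inr i)) = Sum.inr (j.succAbove i) := rfl

lemma rec0 (n k : ℕ) (hn : 2 ≤ n) :
    Cnt (Fin (n + 1) ⊕ Fin k) (PP _ _) = ∑ j : Fin k,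
      Cnt (Fin n ⊕ Fin k) (fun x d => PP _ _ x (d + if x = Sum.inr j then 1 else 0)) := by
  classical
  rw [← Cnt_equiv (eA n k), Cnt_pend _ (fun d => Iff.rfl), Fintype.sum_sum_type,
    Finset.sum_eq_zero, zero_add]
  · refine Finset.sum_congr rfl fun j _ => Cnt_congr ?_
    rintro (i|l) d
    · simp [PP, eA_inl, eA_inr]
    · by_cases h : l = j <;> simp [PP, eA_inl, eA_inr, h]
  · intro i _
    have : Nontrivial (Fin n ⊕ Fin k) := by
      rw [← Fintype.one_lt_card_iff_nontrivial]; simp; omega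
    refine Cnt_zero (Sum.inl i) ?_
    intro d h
    simpa [PP, eA_inl, eA_inr] using h

lemma rec1 (n k : ℕ) (j : Fin (k + 1)) :
    Cnt (Fin n ⊕ Fin (k + 1)) (fun x d => PP _ _ x (d + if x = Sum.inr j then 1 else 0)) =
      Cnt (Fin n ⊕ Fin (k + 1)) (PP _ _) + Cnt (Fin n ⊕ Fin k) (PP _ _) * (n + k - 1) := by
  classical
  have h : Cnt (Fin n ⊕ Fin (k + 1)) (fun x d => if x = Sum.inr j then d = 2 else PP _ _ x d) =
      Cnt (Fin n ⊕ Fin k) (PP _ _) * (n + k - 1) := by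
    rw [← Cnt_equiv (eB n k j), Cnt_subd _ (fun d => by simp [eB_none])]
    congr 1
    · refine Cnt_congr ?_
      rintro (i|l) d
      · simp [PP, eB_inl, eB_inr]
      · simp [PP, eB_inl, eB_inr, Fin.succAbove_ne]
    · simp
  rw [← h]
  refine Cnt_split (Sum.inr j) ?_ ?_ ?_ ?_
  · intro d; simp [PP]; omega
  · intro d; simp [PP]; omega
  · intro w hw d; simp [hw]
  · intro w hw d; simp [hw]

lemma rec2 (n k : ℕ) (hn : 2 ≤ n) :
    Nat.card (LeafTree (n + 1) (k + 1)) =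
      (k + 1) * (Nat.card (LeafTree n (k + 1)) + Nat.card (LeafTree n k) * (n + k - 1)) := by
  simp only [card_LT, rec0 n _ hn, rec1]
  simp

lemma rec3 (n : ℕ) (hn : 2 ≤ n) : Nat.card (LeafTree (n + 1) 0) = 0 := by
  simp only [card_LT, rec0 n _ hn]
  simp

lemma big (n k : ℕ) (h : 2 * n + 2 * k < n + 3 * k + 2) : Nat.card (LeafTree n k) = 0 := by
  rw [Nat.card_eq_zero]
  left
  refine ⟨fun ⟨G, hG, h1, h3⟩ => ?_⟩
  have := ((tree_iff G).1 hG).2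
  rw [Fintype.sum_sum_type] at this
  simp only [h1] at this
  have h' : ∑ j : Fin k, 3 ≤ ∑ j : Fin k, (G.neighborSet (Sum.inr j)).ncard :=
    Finset.sum_le_sum fun j _ => h3 j
  simp at this h'
  omega

lemma base : Nat.card (LeafTree 2 0) = 1 := by
  classical
  have hcount : ∀ i : Fin 2,
      ((⊤ : SimpleGraph (Fin 2 ⊕ Fin 0)).neighborSet (Sum.inl i)).ncard = 1 := by
    intro i
    rw [SimpleGraph.neighborSet_top, Set.ncard_compl, Set.ncard_singleton]
    simp
  have hT : (⊤ : SimpleGraph (Fin 2 ⊕ Fin 0)).IsTree := by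
    rw [tree_iff]
    refine ⟨SimpleGraph.connected_top, ?_⟩
    rw [Fintype.sum_sum_type]
    simp only [hcount]
    simp
  rw [Nat.card_eq_one_iff_unique]
  refine ⟨⟨?_⟩, ⟨⟨⊤, hT, hcount, fun j => j.elim0⟩⟩⟩
  have key : ∀ G : LeafTree 2 0, G.1 = ⊤ := by
    rintro ⟨G, hG, h1, -⟩
    change G = ⊤
    rw [eq_top_iff]
    rintro (x|x) (y|y) hxy
    · have := h1 x
      obtain ⟨z, hz⟩ := Set.ncard_eq_one.1 this
      have hz : G.Adj (Sum.inl x) z := by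
        rw [← SimpleGraph.mem_neighborSet, hz]; rfl
      obtain (z|z) := z
      · have h1 : x ≠ y := fun h => hxy (by rw [h])
        have h2 : x ≠ z := fun h => hz.ne (by rw [h])
        have : y = z := by omega
        rwa [this]
      · exact z.elim0
    · exact y.elim0
    · exact x.elim0
    · exact x.elim0
  intro a b
  exact Subtype.ext ((key a).trans (key b).symm)

noncomputable def S (n : ℕ) : ℚ := ∑ k ∈ Finset.range (n - 1),
        ((-1 : ℚ)) ^ k * (Nat.card (LeafTree n k) : ℚ) / (k.factorial : ℚ)

lemma S_succ (m : ℕ) : S (m + 3) = - (m + 1) * S (m + 2) := by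
  set t : ℕ → ℚ := fun k => (Nat.card (LeafTree (m + 2) k) : ℚ) / (k.factorial : ℚ) with ht
  have h1 : S (m + 3) = ∑ k ∈ Finset.range (m + 1),
      ((-1 : ℚ) ^ (k + 1) * (k + 1 : ℕ) * t (k + 1) + (-1) ^ (k + 1) * (m + 1 + k) * t k) := by
    unfold S
    rw [show m + 3 - 1 = (m + 1) + 1 by omega, Finset.sum_range_succ', rec3 (m + 2) (by omega)]
    simp only [Nat.cast_zero, mul_zero, zero_div, add_zero]
    refine Finset.sum_congr rfl fun k _ => ?_
    rw [rec2 (m + 2) k (by omega), show m + 2 + k - 1 = m + 1 + k by omega]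
    simp only [ht, Nat.factorial_succ]
    have : (k.factorial : ℚ) ≠ 0 := by positivity
    have : (k + 1 : ℚ) ≠ 0 := by positivity
    push_cast
    field_simp
    try ring
  have h2 : ∑ k ∈ Finset.range (m + 1), ((-1 : ℚ) ^ (k + 1) * (k + 1 : ℕ) * t (k + 1)) =
      ∑ k ∈ Finset.range (m + 1), ((-1 : ℚ) ^ k * (k : ℕ) * t k) := by
    have a := Finset.sum_range_succ' (fun k => (-1 : ℚ) ^ k * (k : ℕ) * t k) (m + 1)
    have b := Finset.sum_range_succ (fun k => (-1 : ℚ) ^ k * (k : ℕ) * t k) (m + 1)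
    have c : t (m + 1) = 0 := by
      simp only [ht]
      rw [big _ _ (by omega)]; simp
    simp only [c] at b
    simp only [Nat.cast_zero, mul_zero, zero_mul, add_zero] at a b
    rw [← a, b]
  rw [h1, Finset.sum_add_distrib, h2, ← Finset.sum_add_distrib]
  unfold S
  rw [show m + 2 - 1 = m + 1 by omega, Finset.mul_sum]
  refine Finset.sum_congr rfl fun k _ => ?_
  simp only [ht]
  ring

lemma S_eq (m : ℕ) : S (m + 2) = (-1) ^ m * (m.factorial : ℚ) := by
  induction m with
  | zero => simp [S, base]
  | succ m ih =>
    rw [show m + 1 + 2 = m + 3 by omega, S_succ, ih, Nat.factorial_succ]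
    push_cast
    ring

end STree

/-- For `n ≥ 3`, the signed count of leaf-labeled (unrooted) trees with `n` labeled
leaves and all internal vertices of degree at least 3, counted with sign
`(-1)^{number of internal vertices}`, equals `(-1)^n (n-2)!`. (Internal vertices are
unlabeled; since such a tree has no automorphisms fixing the leaves, this is accounted
for by dividing the internally-labeled count by `k!`.) -/
theorem signed_count_trees (n : ℕ) (hn : 3 ≤ n) :
    ∑ k ∈ Finset.range (n - 1),
        ((-1 : ℚ)) ^ k * (Nat.card (LeafTree n k) : ℚ) / (k.factorial : ℚ) =
      ((-1 : ℚ)) ^ n * ((n - 2).factorial : ℚ) := by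
  obtain ⟨m, rfl⟩ : ∃ m, n = m + 2 := ⟨n - 2, by omega⟩
  have h := STree.S_eq m
  unfold STree.S at h
  rw [h, Nat.add_sub_cancel, pow_add]
  norm_num
end
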